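/- arXiv:2201.05030 — 3 statements merged into one kernel-verified Lean document; each statement's English description precedes it below -/
import Mathlib

section
/- (Generalized Newton–MacLaurin inequality.) Let n ≥ 1 and let k, l, r, s be integers with n ≥ k > l ≥ 0, r > s ≥ 0, k ≥ r, and l ≥ s. Then for every λ ∈ Γ_k one has [ (σ_k(λ)/C(n,k)) / (σ_l(λ)/C(n,l)) ]^{1/(k−l)} ≤ [ (σ_r(λ)/C(n,r)) / (σ_s(λ)/C(n,s)) ]^{1/(r−s)}, where C(n,j) = n!/(j!(n−j)!) is the binomial coefficient. -/
open Finset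

/-- The `k`-th elementary symmetric function of `lam : Fin n → ℝ`. -/
noncomputable def esymm (n k : ℕ) (lam : Fin n → ℝ) : ℝ :=
  ∑ s ∈ Finset.powersetCard k (Finset.univ : Finset (Fin n)), ∏ i ∈ s, lam i

/-- The Gårding cone `Γ_k ⊆ ℝ^n`. -/
def GammaCone (n k : ℕ) : Set (Fin n → ℝ) :=
  {lam | ∀ i : ℕ, 1 ≤ i → i ≤ k → 0 < esymm n i lam}

/-- The normalized elementary symmetric function of a multiset of reals. -/
noncomputable def esymmMean (s : Multiset ℝ) (k : ℕ) : ℝ :=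
  s.esymm k / (s.card.choose k : ℝ)

theorem Multiset.esymm_cons_succ {R : Type*} [CommSemiring R] (a : R) (s : Multiset R) (k : ℕ) :
    (a ::ₘ s).esymm (k + 1) = s.esymm (k + 1) + a * s.esymm k := by
  simp [Multiset.esymm, Multiset.powersetCard_cons, Multiset.sum_map_mul_left]

theorem Multiset.esymm_eq_zero_of_card_lt {R : Type*} [CommSemiring R] {s : Multiset R} {k : ℕ}
    (h : s.card < k) : s.esymm k = 0 := by
  simp [Multiset.esymm, Multiset.powersetCard_eq_empty k h]

/-- Newton's inequality for the three top elementary symmetric functions, without divisions. -/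
theorem Multiset.esymm_newton_top (k : ℕ) : ∀ s : Multiset ℝ, s.card = k + 2 →
    2 * (k + 2 : ℝ) * (s.esymm k * s.esymm (k + 2)) ≤ (k + 1) * s.esymm (k + 1) ^ 2 := by
  induction k with
  | zero =>
    intro s hs
    obtain ⟨a, b, rfl⟩ := Multiset.card_eq_two.1 hs
    have h1 : ({a, b} : Multiset ℝ).esymm 1 = a + b := Multiset.esymm_pair_one a b
    have h2 : ({a, b} : Multiset ℝ).esymm 2 = a * b := Multiset.esymm_pair_two a b
    have h0 : ({a, b} : Multiset ℝ).esymm 0 = 1 := by simp [Multiset.esymm]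
    simp only [zero_add, h0, h1, h2]
    norm_num
    nlinarith [sq_nonneg (a - b)]
  | succ k ih =>
    intro s hs
    obtain ⟨a, t, rfl⟩ := Multiset.card_pos_iff_exists_mem.1 (by omega : 0 < s.card) |>.imp
      fun a ha => Multiset.exists_cons_of_mem ha
    have ht : t.card = k + 2 := by simpa using hs
    have key := ih t ht
    rw [Multiset.esymm_cons_succ, Multiset.esymm_cons_succ, Multiset.esymm_cons_succ,
      Multiset.esymm_eq_zero_of_card_lt (by omega : t.card < k + 1 + 2)]
    simp only [show k + 1 + 1 = k + 2 from rfl]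
    push_cast
    generalize t.esymm k = A at *
    generalize t.esymm (k + 1) = B at *
    generalize t.esymm (k + 2) = C at *
    have hk : (0 : ℝ) < k + 2 := by positivity
    refine le_of_mul_le_mul_left ?_ hk
    nlinarith [sq_nonneg (a * B - (k + 2) * C),
      mul_le_mul_of_nonneg_left key (by positivity : 0 ≤ a ^ 2 * ((k : ℝ) + 3))]

open Polynomial in
/-- Differentiating `∏ (X + a)` removes one variable while preserving the normalized
elementary symmetric functions. -/
theorem exists_card_eq_esymmMean_eq {N : ℕ} {s : Multiset ℝ} (hs : s.card = N + 1) :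
    ∃ t : Multiset ℝ, t.card = N ∧ ∀ i ≤ N, esymmMean t i = esymmMean s i := by
  set P : ℝ[X] := (s.map fun r => X + C r).prod with hP
  have hcoeff : ∀ j ≤ N + 1, P.coeff j = s.esymm (N + 1 - j) := fun j hj => by
    rw [hP, Multiset.prod_X_add_C_coeff s (by omega), hs]
  have hmonic : P.Monic := monic_multiset_prod_of_monic _ _ fun a _ => monic_X_add_C a
  have hdeg : P.natDegree = N + 1 := by
    rw [hP, natDegree_multiset_prod_of_monic _ fun f hf => ?_]
    · simp [hs, add_comm]
    · obtain ⟨a, -, rfl⟩ := Multiset.mem_map.1 hf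
      exact monic_X_add_C a
  have hsplit : P.Splits := Splits.multisetProd (by
    simp only [Multiset.mem_map]; rintro _ ⟨a, -, rfl⟩; exact Splits.X_add_C a)
  have hroots : P.roots.card = N + 1 := by rw [← hdeg, hsplit.natDegree_eq_card_roots]
  have hdeg' : P.derivative.natDegree = N := by
    rw [natDegree_derivative, hdeg, Nat.add_sub_cancel]
  have hcard : P.derivative.roots.card = N := by
    have h1 := card_roots_le_derivative P
    have h2 := card_roots' P.derivative
    omega
  have hlead : P.derivative.leadingCoeff = N + 1 := by
    rw [leadingCoeff, hdeg', coeff_derivative, ← hdeg, hmonic.coeff_natDegree, one_mul]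
  have hfactor := (splits_iff_card_roots.2 (hcard.trans hdeg'.symm)).eq_prod_roots
  rw [hlead] at hfactor
  refine ⟨P.derivative.roots.map Neg.neg, by simpa using hcard, fun i hi => ?_⟩
  set t := P.derivative.roots.map Neg.neg with ht
  have htc : t.card = N := by simpa [ht] using hcard
  have hprod : (P.derivative.roots.map fun a => X - C a).prod
      = (t.map fun r => X + C r).prod := by
    simp [ht, Multiset.map_map, sub_eq_add_neg]
  rw [hprod] at hfactor
  have key := congrArg (fun p => p.coeff (N - i)) hfactor
  simp only [coeff_derivative, coeff_C_mul] at key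
  rw [hcoeff _ (by omega), Multiset.prod_X_add_C_coeff t (by omega), htc,
    show N + 1 - (N - i + 1) = i by omega, show N - (N - i) = i by omega,
    Nat.cast_sub hi] at key
  have hch : (N.choose i : ℝ) * (N + 1) = (N + 1).choose i * (N + 1 - i) := by
    have := congrArg (Nat.cast (R := ℝ)) (Nat.choose_mul_succ_eq N i)
    push_cast [Nat.cast_sub (show i ≤ N + 1 by omega)] at this
    exact this
  have h1 : (0 : ℝ) < N.choose i := by exact_mod_cast Nat.choose_pos hi
  have h2 : (0 : ℝ) < (N + 1).choose i := by
    exact_mod_cast Nat.choose_pos (show i ≤ N + 1 by omega)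
  have h3 : (0 : ℝ) < N + 1 := by positivity
  rw [esymmMean, esymmMean, htc, hs, div_eq_div_iff h1.ne' h2.ne']
  refine mul_right_cancel₀ h3.ne' ?_
  linear_combination -((N + 1).choose i : ℝ) * key - s.esymm i * hch

/-- **Newton's inequality** for real numbers of arbitrary sign. -/
theorem esymmMean_mul_le_sq {N k : ℕ} (hk : k + 2 ≤ N) : ∀ s : Multiset ℝ, s.card = N →
    esymmMean s k * esymmMean s (k + 2) ≤ esymmMean s (k + 1) ^ 2 := by
  induction N, hk using Nat.le_induction with
  | base =>
    intro s hs
    have key := Multiset.esymm_newton_top k s hs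
    have hch : ((k + 2).choose k : ℝ) = (k + 2) * (k + 1) / 2 := by
      rw [Nat.choose_symm_add, Nat.cast_choose_two]
      push_cast
      ring
    have hch1 : (k + 2).choose (k + 1) = k + 2 := Nat.choose_succ_self_right (k + 1)
    simp only [esymmMean, hs, Nat.choose_self, hch, hch1]
    push_cast
    rw [div_mul_div_comm, div_pow, div_le_div_iff₀ (by positivity) (by positivity)]
    nlinarith [mul_le_mul_of_nonneg_left key (by positivity : 0 ≤ ((k : ℝ) + 2) / 2)]
  | succ N hN ih =>
    intro s hs
    obtain ⟨t, ht, h⟩ := exists_card_eq_esymmMean_eq hs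
    rw [← h k (by omega), ← h (k + 1) (by omega), ← h (k + 2) (by omega)]
    exact ih t ht

/-- A discretely concave sequence has decreasing slopes across three points. -/
theorem slope_le_slope_of_second_difference {k : ℕ} {L : ℕ → ℝ}
    (hL : ∀ i, i + 2 ≤ k → L i + L (i + 2) ≤ 2 * L (i + 1)) {a b c : ℕ}
    (hab : a ≤ b) (hbc : b ≤ c) (hck : c ≤ k) :
    ((b : ℝ) - a) * (L c - L b) ≤ ((c : ℝ) - b) * (L b - L a) := by
  have hd : ∀ i j, i ≤ j → j + 1 ≤ k → L (j + 1) - L j ≤ L (i + 1) - L i := by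
    intro i j hij
    induction j, hij using Nat.le_induction with
    | base => intro _; rfl
    | succ j _ ih => intro hj; linarith [ih (by omega), hL j hj]
  obtain rfl | hbc' := hbc.eq_or_lt
  · simp
  have hright : ∀ c, b ≤ c → c ≤ k → L c - L b ≤ ((c : ℝ) - b) * (L (b + 1) - L b) := by
    intro c hc
    induction c, hc using Nat.le_induction with
    | base => intro _; simp
    | succ c hbc ih =>
      intro hck
      push_cast
      linarith [ih (by omega), hd b c hbc hck]
  have hleft : ∀ j, a ≤ j → j ≤ b → ((j : ℝ) - a) * (L (b + 1) - L b) ≤ L j - L a := by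
    intro j hj
    induction j, hj using Nat.le_induction with
    | base => intro _; simp
    | succ j hj ih =>
      intro hjb
      push_cast
      linarith [ih (by omega), hd j b (by omega) (by omega)]
  have h1 : (0 : ℝ) ≤ (b : ℝ) - a := sub_nonneg.2 (by exact_mod_cast hab)
  have h2 : (0 : ℝ) ≤ (c : ℝ) - b := sub_nonneg.2 (by exact_mod_cast hbc)
  nlinarith [mul_le_mul_of_nonneg_left (hright c hbc hck) h1,
    mul_le_mul_of_nonneg_left (hleft b hab le_rfl) h2]

/-- Slopes of a discretely concave sequence decrease when both endpoints move to the right. -/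
theorem div_le_div_of_second_difference {k l r s : ℕ} {L : ℕ → ℝ}
    (hL : ∀ i, i + 2 ≤ k → L i + L (i + 2) ≤ 2 * L (i + 1))
    (hlk : l < k) (hsr : s < r) (hrk : r ≤ k) (hsl : s ≤ l) :
    (L k - L l) / ((k : ℝ) - l) ≤ (L r - L s) / ((r : ℝ) - s) := by
  have h1 := slope_le_slope_of_second_difference hL hsl hlk.le le_rfl
  have h2 := slope_le_slope_of_second_difference hL hsr.le hrk le_rfl
  have hkl : (0 : ℝ) < (k : ℝ) - l := sub_pos.2 (by exact_mod_cast hlk)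
  have hrs : (0 : ℝ) < (r : ℝ) - s := sub_pos.2 (by exact_mod_cast hsr)
  have hks : (0 : ℝ) < (k : ℝ) - s := sub_pos.2 (by exact_mod_cast hsl.trans_lt hlk)
  calc (L k - L l) / ((k : ℝ) - l) ≤ (L k - L s) / ((k : ℝ) - s) := by
        rw [div_le_div_iff₀ hkl hks]; linarith
    _ ≤ (L r - L s) / ((r : ℝ) - s) := by
        rw [div_le_div_iff₀ hks hrs]; linarith

/-- Generalized Newton–MacLaurin inequality. -/
theorem generalized_newton_maclaurin (n k l r s : ℕ) (hn : 1 ≤ n)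
    (hkn : k ≤ n) (hlk : l < k) (hsr : s < r) (hrk : r ≤ k) (hsl : s ≤ l)
    (lam : Fin n → ℝ) (hlam : lam ∈ GammaCone n k) :
    ((esymm n k lam / (n.choose k : ℝ)) / (esymm n l lam / (n.choose l : ℝ)))
        ^ (((k : ℝ) - (l : ℝ))⁻¹)
      ≤ ((esymm n r lam / (n.choose r : ℝ)) / (esymm n s lam / (n.choose s : ℝ)))
        ^ (((r : ℝ) - (s : ℝ))⁻¹) := by
  set m : Multiset ℝ := (univ : Finset (Fin n)).val.map lam with hm
  have hcard : m.card = n := by simp [hm]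
  have hmean : ∀ j, esymm n j lam / (n.choose j : ℝ) = esymmMean m j := fun j => by
    rw [esymmMean, hcard, hm, Finset.esymm_map_val, esymm]
  have hpos : ∀ j ≤ k, 0 < esymmMean m j := fun j hj => by
    rw [← hmean]
    refine div_pos ?_ (by exact_mod_cast Nat.choose_pos (hj.trans hkn))
    obtain rfl | hj0 := Nat.eq_zero_or_pos j
    · simp [esymm]
    · exact hlam j hj0 hj
  have hconc : ∀ i, i + 2 ≤ k → Real.log (esymmMean m i) + Real.log (esymmMean m (i + 2))
      ≤ 2 * Real.log (esymmMean m (i + 1)) := fun i hi => by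
    have h0 := hpos i (by omega)
    have h2 := hpos (i + 2) hi
    have h := Real.log_le_log (mul_pos h0 h2) (esymmMean_mul_le_sq (hi.trans hkn) m hcard)
    rwa [Real.log_mul h0.ne' h2.ne', Real.log_pow] at h
  have hslope := div_le_div_of_second_difference (L := fun i => Real.log (esymmMean m i))
    hconc hlk hsr hrk hsl
  simp only [hmean]
  have hk := hpos k le_rfl
  have hl := hpos l hlk.le
  have hr := hpos r hrk
  have hs := hpos s (hsl.trans hlk.le)
  rw [Real.rpow_def_of_pos (div_pos hk hl), Real.rpow_def_of_pos (div_pos hr hs),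
    Real.log_div hk.ne' hl.ne', Real.log_div hr.ne' hs.ne', ← div_eq_mul_inv, ← div_eq_mul_inv]
  exact Real.exp_le_exp.2 hslope
end

section
/- Let 2 ≤ k ≤ n and let β_0,…,β_{k−2} be nonnegative real numbers. Then for all λ, μ ∈ Γ_{k−1}, Σ_{i=1}^n f_i(λ) μ_i ≥ f(μ) + Σ_{l=0}^{k−2} (k−l) β_l σ_l(λ)/σ_{k−1}(λ). -/
open Finset

/-- The mixed Hessian operator
`f(λ) = σ_k(λ)/σ_{k-1}(λ) - ∑_{l=0}^{k-2} β_l σ_l(λ)/σ_{k-1}(λ)`. -/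
noncomputable def fmix (n k : ℕ) (β : ℕ → ℝ) (lam : Fin n → ℝ) : ℝ :=
  esymm n k lam / esymm n (k-1) lam
    - ∑ l ∈ Finset.range (k-1), β l * (esymm n l lam / esymm n (k-1) lam)

open Polynomial in
theorem Polynomial.Splits.derivative_real {p : ℝ[X]} (hp : p.Splits) :
    (derivative p).Splits := by
  rcases Nat.eq_zero_or_pos p.natDegree with h0 | hpos
  · rw [derivative_of_natDegree_zero h0]
    exact Splits.zero
  · rw [splits_iff_card_roots]
    have h1 := card_roots_le_derivative p
    rw [splits_iff_card_roots.1 hp] at h1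
    have h2 := natDegree_derivative_lt hpos.ne'
    have h3 := card_roots' (derivative p)
    omega

open Polynomial in
/-- The Laguerre inequality for real-rooted polynomials. -/
theorem Polynomial.Splits.eval_mul_eval_derivative_derivative_le {p : ℝ[X]} (hp : p.Splits)
    (t : ℝ) :
    p.eval t * (derivative (derivative p)).eval t ≤ (derivative p).eval t ^ 2 := by
  obtain ⟨m, hm⟩ := splits_iff_exists_multiset'.1 hp
  rw [hm]
  generalize p.leadingCoeff = c
  clear hm hp
  induction m using Multiset.induction_on with
  | empty => simp
  | cons a m ih =>
    rw [Multiset.map_cons, Multiset.prod_cons, mul_left_comm]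
    set q := C c * (m.map fun b => X + C b).prod
    simp only [derivative_mul, derivative_add, derivative_X, derivative_C, eval_add, eval_mul,
      eval_X, eval_C, add_zero, one_mul]
    nlinarith [mul_nonneg (sq_nonneg (t + a)) (sub_nonneg.2 ih), sq_nonneg (q.eval t)]

open Polynomial in
/-- Log-concavity of the coefficients of a real-rooted polynomial. -/
theorem Polynomial.Splits.coeff_mul_coeff_le_sq {p : ℝ[X]} (hp : p.Splits) (k : ℕ) :
    p.coeff k * p.coeff (k + 2) ≤ p.coeff (k + 1) ^ 2 := by
  by_cases hneg : p.coeff k * p.coeff (k + 2) ≤ 0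
  · exact hneg.trans (sq_nonneg _)
  have hs : (derivative^[k] p).Splits := by
    clear hneg
    induction k with
    | zero => exact hp
    | succ k ih => rw [Function.iterate_succ_apply']; exact ih.derivative_real
  have h := hs.eval_mul_eval_derivative_derivative_le 0
  simp only [← coeff_zero_eq_eval_zero, coeff_derivative, coeff_iterate_derivative,
    nsmul_eq_mul] at h
  have e0 : (0 + k).descFactorial k = k.factorial := by
    rw [zero_add, Nat.descFactorial_self]
  have e1 : (0 + 1 + k).descFactorial k = (k + 1) * k.factorial := by
    rw [zero_add, add_comm 1 k, ← Nat.factorial_succ]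
    have := Nat.factorial_mul_descFactorial (n := k + 1) (k := k) (by omega)
    simpa using this
  have e2 : 2 * (0 + 1 + 1 + k).descFactorial k = (k + 2) * ((k + 1) * k.factorial) := by
    have := Nat.factorial_mul_descFactorial (n := k + 2) (k := k) (by omega)
    rw [show k + 2 - k = 2 by omega] at this
    rw [show 0 + 1 + 1 + k = k + 2 by omega]
    simpa [Nat.factorial_succ] using this
  have e2' : (2 : ℝ) * ((0 + 1 + 1 + k).descFactorial k : ℝ)
      = (k + 2) * ((k + 1) * k.factorial) := by exact_mod_cast e2
  rw [e0, e1] at h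
  rw [show 0 + k = k by omega, show 0 + 1 + k = k + 1 by omega,
    show 0 + 1 + 1 + k = k + 2 by omega] at h
  rw [show 0 + 1 + 1 + k = k + 2 by omega] at e2'
  push_cast at h
  have hF : (0 : ℝ) < k.factorial := by positivity
  have hk : (0 : ℝ) ≤ k := by positivity
  set F : ℝ := (k.factorial : ℝ)
  set a := p.coeff k
  set b := p.coeff (k + 1)
  set c := p.coeff (k + 2)
  have h' : F ^ 2 * (k + 1) * ((k + 2) * (a * c)) ≤ F ^ 2 * (k + 1) * ((k + 1) * b ^ 2) := by
    calc _ = F * a * (((k + 2).descFactorial k : ℝ) * c * (1 + 1) * (0 + 1)) := by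
          linear_combination -(F * a * c) * e2'
      _ ≤ ((k + 1) * F * b * (0 + 1)) ^ 2 := h
      _ = _ := by ring
  have h2 := le_of_mul_le_mul_left h' (by positivity)
  nlinarith

/-- The `k`-th elementary symmetric function of the variables indexed by a finset. -/
noncomputable def esymmOn {ι : Type*} (s : Finset ι) (k : ℕ) (x : ι → ℝ) : ℝ :=
  ∑ t ∈ powersetCard k s, ∏ i ∈ t, x i

section esymmOn

variable {ι : Type*}

theorem esymmOn_zero (s : Finset ι) (x : ι → ℝ) : esymmOn s 0 x = 1 := by
  simp [esymmOn]

theorem esymmOn_empty_succ (k : ℕ) (x : ι → ℝ) : esymmOn ∅ (k + 1) x = 0 := by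
  rw [esymmOn, powersetCard_eq_empty.2 (by simp), sum_empty]

theorem esymmOn_one (s : Finset ι) (x : ι → ℝ) : esymmOn s 1 x = ∑ i ∈ s, x i := by
  simp [esymmOn, powersetCard_one]

theorem esymmOn_smul (s : Finset ι) (k : ℕ) (t : ℝ) (x : ι → ℝ) :
    esymmOn s k (t • x) = t ^ k * esymmOn s k x := by
  rw [esymmOn, esymmOn, mul_sum]
  refine sum_congr rfl fun u hu => ?_
  simp [prod_mul_distrib, (mem_powersetCard.1 hu).2]

/-- The Gårding cone `Γ_k` in the variables indexed by `s`. -/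
def gammaConeOn (s : Finset ι) (k : ℕ) : Set (ι → ℝ) :=
  {x | ∀ j ≤ k, 0 < esymmOn s j x}

/-- The quotient `σ_{k+1}/σ_k` in the variables indexed by `s`. -/
noncomputable def esymmQuot (s : Finset ι) (k : ℕ) (x : ι → ℝ) : ℝ :=
  esymmOn s (k + 1) x / esymmOn s k x

theorem esymmQuot_pos {s : Finset ι} {k j : ℕ} {x : ι → ℝ} (hx : x ∈ gammaConeOn s k)
    (hj : j + 1 ≤ k) : 0 < esymmQuot s j x :=
  div_pos (hx _ hj) (hx _ (by omega))

variable [DecidableEq ι]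

theorem esymmOn_insert {a : ι} {s : Finset ι} (ha : a ∉ s) (k : ℕ) (x : ι → ℝ) :
    esymmOn (insert a s) (k + 1) x = esymmOn s (k + 1) x + x a * esymmOn s k x := by
  have hmem : ∀ t ∈ powersetCard k s, a ∉ t := fun t ht h =>
    ha ((mem_powersetCard.1 ht).1 h)
  rw [esymmOn, powersetCard_succ_insert ha, sum_union, sum_image, esymmOn, esymmOn, mul_sum]
  · congr 1
    exact sum_congr rfl fun t ht => prod_insert (hmem t ht)
  · intro t ht u hu h
    rw [← erase_insert (hmem t ht), h, erase_insert (hmem u hu)]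
  · rw [disjoint_left]
    intro t ht ht'
    obtain ⟨u, -, rfl⟩ := mem_image.1 ht'
    exact ha ((mem_powersetCard.1 ht).1 (mem_insert_self a u))

theorem esymmOn_succ_eq_erase {a : ι} {s : Finset ι} (ha : a ∈ s) (k : ℕ) (x : ι → ℝ) :
    esymmOn s (k + 1) x = esymmOn (s.erase a) (k + 1) x + x a * esymmOn (s.erase a) k x := by
  rw [← esymmOn_insert (notMem_erase a s), insert_erase ha]

theorem sum_mul_esymmOn_erase (s : Finset ι) (k : ℕ) (x : ι → ℝ) :
    ∑ i ∈ s, x i * esymmOn (s.erase i) k x = (k + 1) * esymmOn s (k + 1) x := by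
  induction s using Finset.induction_on generalizing k with
  | empty => simp [esymmOn_empty_succ]
  | insert a s ha ih =>
    have hne : ∀ i ∈ s, a ≠ i := fun i hi h => ha (h ▸ hi)
    rw [sum_insert ha, erase_insert ha]
    cases k with
    | zero => simp [esymmOn_zero, esymmOn_one, sum_insert ha]
    | succ k =>
      have h : ∀ i ∈ s, x i * esymmOn ((insert a s).erase i) (k + 1) x
          = x i * esymmOn (s.erase i) (k + 1) x + x a * (x i * esymmOn (s.erase i) k x) := by
        intro i hi
        rw [erase_insert_of_ne (hne i hi), esymmOn_insert fun h => ha (mem_of_mem_erase h)]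
        ring
      rw [sum_congr rfl h, sum_add_distrib, ← mul_sum, ih, ih, esymmOn_insert ha]
      push_cast
      ring

open Polynomial in
theorem coeff_prod_one_add_C_mul_X (s : Finset ι) (x : ι → ℝ) (k : ℕ) :
    (∏ i ∈ s, (1 + C (x i) * X)).coeff k = esymmOn s k x := by
  induction s using Finset.induction_on generalizing k with
  | empty =>
    cases k with
    | zero => simp [esymmOn_zero]
    | succ k => simp [esymmOn_empty_succ, coeff_one]
  | insert a s ha ih =>
    rw [prod_insert ha, add_mul, one_mul, mul_assoc, coeff_add, coeff_C_mul, ih]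
    cases k with
    | zero => simp [esymmOn_zero]
    | succ k => rw [coeff_X_mul, ih, esymmOn_insert ha]

open Polynomial in
/-- A weak form of Newton's inequality. -/
theorem esymmOn_mul_esymmOn_le_sq (s : Finset ι) (k : ℕ) (x : ι → ℝ) :
    esymmOn s k x * esymmOn s (k + 2) x ≤ esymmOn s (k + 1) x ^ 2 := by
  have hs : (∏ i ∈ s, (1 + C (x i) * X)).Splits :=
    Splits.prod fun i _ => Splits.of_natDegree_le_one (by compute_degree)
  simpa only [coeff_prod_one_add_C_mul_X] using hs.coeff_mul_coeff_le_sq k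

theorem gammaConeOn_erase {s : Finset ι} {a : ι} (ha : a ∈ s) {k : ℕ} {x : ι → ℝ}
    (hx : x ∈ gammaConeOn s (k + 1)) : x ∈ gammaConeOn (s.erase a) k := by
  induction k with
  | zero =>
    intro j hj
    rw [Nat.le_zero.1 hj, esymmOn_zero]
    exact one_pos
  | succ k ih =>
    have ih' := ih fun j hj => hx j (by omega)
    intro j hj
    rcases Nat.lt_or_ge j (k + 1) with h | h
    · exact ih' j (by omega)
    obtain rfl : j = k + 1 := by omega
    have h0 := ih' k le_rfl
    have h1 := hx (k + 1) (by omega)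
    have h2 := hx (k + 2) le_rfl
    rw [esymmOn_succ_eq_erase ha] at h1 h2
    have hN := esymmOn_mul_esymmOn_le_sq (s.erase a) k x
    by_contra! hc
    nlinarith [mul_pos h0 h2, mul_nonneg h1.le (neg_nonneg.2 hc)]

theorem esymmOn_div_erase_eq {s : Finset ι} {a : ι} (ha : a ∈ s) {k : ℕ} {x : ι → ℝ}
    (hx : x ∈ gammaConeOn s (k + 1)) :
    esymmOn s (k + 1) x / esymmOn (s.erase a) k x = x a + esymmQuot (s.erase a) k x := by
  have := (gammaConeOn_erase ha hx k le_rfl).ne'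
  rw [esymmOn_succ_eq_erase ha, esymmQuot]
  field_simp
  ring

/-- The Marcus–Lopes identity. -/
theorem mul_esymmQuot_eq {s : Finset ι} {k : ℕ} {x : ι → ℝ} (hx : x ∈ gammaConeOn s (k + 1)) :
    (k + 2) * esymmQuot s (k + 1) x
      = ∑ i ∈ s, (x i - x i ^ 2 / (x i + esymmQuot (s.erase i) k x)) := by
  have h0 := (hx (k + 1) le_rfl).ne'
  have h1 : ∀ i ∈ s, x i - x i ^ 2 / (x i + esymmQuot (s.erase i) k x)
      = x i * esymmOn (s.erase i) (k + 1) x / esymmOn s (k + 1) x := by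
    intro i hi
    have h2 := (gammaConeOn_erase hi hx k le_rfl).ne'
    rw [← esymmOn_div_erase_eq hi hx]
    field_simp
    rw [esymmOn_succ_eq_erase hi]
    ring
  rw [sum_congr rfl h1, ← sum_div, sum_mul_esymmOn_erase, esymmQuot]
  push_cast
  ring

theorem add_sq_div_le {a b c d e : ℝ} (hc : 0 < c) (hd : 0 < d) (he : c + d ≤ e) :
    (a + b) ^ 2 / e ≤ a ^ 2 / c + b ^ 2 / d := by
  calc (a + b) ^ 2 / e ≤ (a + b) ^ 2 / (c + d) := by gcongr
    _ ≤ _ := by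
      rw [div_add_div _ _ hc.ne' hd.ne', div_le_div_iff₀ (by positivity) (by positivity)]
      nlinarith [mul_nonneg (mul_pos hc hd).le (sq_nonneg (a * d - b * c)),
        sq_nonneg (a * d - b * c)]

theorem add_mem_gammaConeOn_and_esymmQuot_add_le (k : ℕ) (s : Finset ι) {x y : ι → ℝ}
    (hx : x ∈ gammaConeOn s k) (hy : y ∈ gammaConeOn s k) :
    x + y ∈ gammaConeOn s k ∧ esymmQuot s k x + esymmQuot s k y ≤ esymmQuot s k (x + y) := by
  induction k generalizing s with
  | zero =>
    refine ⟨fun j hj => ?_, ?_⟩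
    · rw [Nat.le_zero.1 hj, esymmOn_zero]
      exact one_pos
    · simp [esymmQuot, esymmOn_zero, esymmOn_one, sum_add_distrib]
  | succ k ih =>
    obtain ⟨h1, h2⟩ := ih s (fun j hj => hx j (by omega)) (fun j hj => hy j (by omega))
    have hxy : x + y ∈ gammaConeOn s (k + 1) := by
      intro j hj
      rcases Nat.lt_or_ge j (k + 1) with h | h
      · exact h1 j (by omega)
      obtain rfl : j = k + 1 := by omega
      have h3 : 0 < esymmQuot s k (x + y) :=
        (add_pos (esymmQuot_pos hx le_rfl) (esymmQuot_pos hy le_rfl)).trans_le h2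
      exact (div_pos_iff_of_pos_right (h1 k le_rfl)).1 h3
    refine ⟨hxy, ?_⟩
    have key : (k + 2 : ℝ) * (esymmQuot s (k + 1) x + esymmQuot s (k + 1) y)
        ≤ (k + 2) * esymmQuot s (k + 1) (x + y) := by
      rw [mul_add, mul_esymmQuot_eq hx, mul_esymmQuot_eq hy, mul_esymmQuot_eq hxy,
        ← sum_add_distrib]
      refine sum_le_sum fun i hi => ?_
      have hx' := gammaConeOn_erase hi hx
      have hy' := gammaConeOn_erase hi hy
      have hdx : 0 < x i + esymmQuot (s.erase i) k x := by
        rw [← esymmOn_div_erase_eq hi hx]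
        exact div_pos (hx _ le_rfl) (hx' _ le_rfl)
      have hdy : 0 < y i + esymmQuot (s.erase i) k y := by
        rw [← esymmOn_div_erase_eq hi hy]
        exact div_pos (hy _ le_rfl) (hy' _ le_rfl)
      have h3 := (ih (s.erase i) hx' hy').2
      have h4 := add_sq_div_le (a := x i) (b := y i) hdx hdy
        (e := (x + y) i + esymmQuot (s.erase i) k (x + y)) (by rw [Pi.add_apply]; linarith)
      simp only [Pi.add_apply] at h4 ⊢
      linarith
    exact le_of_mul_le_mul_left key (by positivity)

theorem add_smul_mem_gammaConeOn_and_esymmQuot_le {k : ℕ} {s : Finset ι} {x y : ι → ℝ}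
    (hx : x ∈ gammaConeOn s k) (hy : y ∈ gammaConeOn s k) {t : ℝ} (ht : 0 < t) :
    x + t • y ∈ gammaConeOn s k ∧
      esymmQuot s k x + t * esymmQuot s k y ≤ esymmQuot s k (x + t • y) := by
  have hty : t • y ∈ gammaConeOn s k := fun j hj => by
    rw [esymmOn_smul]
    exact mul_pos (pow_pos ht j) (hy j hj)
  have hq : esymmQuot s k (t • y) = t * esymmQuot s k y := by
    rw [esymmQuot, esymmQuot, esymmOn_smul, esymmOn_smul]
    have := (hy k le_rfl).ne'
    field_simp
    ring
  rw [← hq]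
  exact add_mem_gammaConeOn_and_esymmQuot_add_le k s hx hty

theorem exists_slope_le_esymmOn_div {s : Finset ι} {l m : ℕ} {x y : ι → ℝ}
    (hx : x ∈ gammaConeOn s (l + m)) (hy : y ∈ gammaConeOn s (l + m)) :
    ∃ S : ℝ, 0 ≤ S ∧
      (∀ t : ℝ, 0 < t → esymmOn s (l + m) x / esymmOn s l x * (1 + t * S)
        ≤ esymmOn s (l + m) (x + t • y) / esymmOn s l (x + t • y)) ∧
      m ≤ S + Real.log ((esymmOn s (l + m) x / esymmOn s l x) /
        (esymmOn s (l + m) y / esymmOn s l y)) := by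
  induction m with
  | zero =>
    have h : ∀ z ∈ gammaConeOn s l, esymmOn s l z / esymmOn s l z = 1 :=
      fun z hz => div_self (hz l le_rfl).ne'
    refine ⟨0, le_rfl, fun t ht => ?_, ?_⟩
    · rw [add_zero, h x hx, h _ (add_smul_mem_gammaConeOn_and_esymmQuot_le hx hy ht).1]
      simp
    · simp [h x hx, h y hy]
  | succ m ih =>
    have hx' : x ∈ gammaConeOn s (l + m) := fun j hj => hx j (by omega)
    have hy' : y ∈ gammaConeOn s (l + m) := fun j hj => hy j (by omega)
    obtain ⟨S, hS, h1, h2⟩ := ih hx' hy'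
    have hstep : ∀ z ∈ gammaConeOn s (l + m), esymmOn s (l + (m + 1)) z / esymmOn s l z
        = esymmOn s (l + m) z / esymmOn s l z * esymmQuot s (l + m) z := by
      intro z hz
      have := (hz (l + m) le_rfl).ne'
      have := (hz l (by omega)).ne'
      rw [esymmQuot, ← add_assoc]
      field_simp
    have hqx : 0 < esymmQuot s (l + m) x := esymmQuot_pos hx le_rfl
    have hqy : 0 < esymmQuot s (l + m) y := esymmQuot_pos hy le_rfl
    have hpx : 0 < esymmOn s (l + m) x / esymmOn s l x :=
      div_pos (hx' _ le_rfl) (hx' _ (by omega))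
    have hpy : 0 < esymmOn s (l + m) y / esymmOn s l y :=
      div_pos (hy' _ le_rfl) (hy' _ (by omega))
    refine ⟨S + esymmQuot s (l + m) y / esymmQuot s (l + m) x, by positivity,
      fun t ht => ?_, ?_⟩
    · obtain ⟨h3, h4⟩ := add_smul_mem_gammaConeOn_and_esymmQuot_le hx' hy' ht
      rw [hstep x hx', hstep _ h3]
      have h5 := h1 t ht
      calc _ ≤ (esymmOn s (l + m) x / esymmOn s l x * (1 + t * S)) *
              (esymmQuot s (l + m) x + t * esymmQuot s (l + m) y) := by
            have e : esymmQuot s (l + m) x + t * esymmQuot s (l + m) y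
              = esymmQuot s (l + m) x *
                (1 + t * (esymmQuot s (l + m) y / esymmQuot s (l + m) x)) := by
              field_simp
            rw [e, mul_mul_mul_comm]
            have hr : 0 ≤ esymmQuot s (l + m) y / esymmQuot s (l + m) x := by positivity
            gcongr
            nlinarith [mul_nonneg (mul_nonneg ht.le hS) (mul_nonneg ht.le hr)]
        _ ≤ _ := mul_le_mul h5 h4 (by positivity)
            (div_pos (h3 _ le_rfl) (h3 _ (by omega))).le
    · rw [hstep x hx', hstep y hy', mul_div_mul_comm, Real.log_mul (by positivity) (by positivity)]
      have h6 := Real.log_le_sub_one_of_pos (div_pos hqy hqx)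
      rw [← inv_div, Real.log_inv] at h6
      rw [inv_div] at h6
      push_cast
      linarith

end esymmOn

/-- Comparison of derivatives of functions ordered to the right of a contact point. -/
theorem HasDerivAt.le_of_le_right {g h : ℝ → ℝ} {g' h' a : ℝ} (hg : HasDerivAt g g' a)
    (hh : HasDerivAt h h' a) (ha : g a = h a) (hle : ∀ t, a < t → g t ≤ h t) : g' ≤ h' := by
  have hg' := hasDerivWithinAt_iff_tendsto_slope' (s := Set.Ioi a) (by simp) |>.1
    hg.hasDerivWithinAt
  have hh' := hasDerivWithinAt_iff_tendsto_slope' (s := Set.Ioi a) (by simp) |>.1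
    hh.hasDerivWithinAt
  refine le_of_tendsto_of_tendsto hg' hh' ?_
  filter_upwards [self_mem_nhdsWithin] with t ht
  have ht' : 0 < t - a := sub_pos.2 ht
  rw [slope_def_field, slope_def_field, ha]
  have := hle t ht
  gcongr

theorem esymmOn_univ (n k : ℕ) (x : Fin n → ℝ) : esymmOn univ k x = esymm n k x := rfl

theorem differentiable_esymm (n k : ℕ) : Differentiable ℝ (esymm n k) := by
  unfold esymm
  fun_prop

theorem differentiableAt_fmix {n k : ℕ} {β : ℕ → ℝ} {x : Fin n → ℝ}
    (hx : esymm n (k - 1) x ≠ 0) : DifferentiableAt ℝ (fmix n k β) x := by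
  have h := fun j => (differentiable_esymm n j) x
  unfold fmix
  have hdiv : ∀ j, DifferentiableAt ℝ (fun z => esymm n j z / esymm n (k - 1) z) x := fun j => by
    simp only [div_eq_mul_inv]
    exact (h j).fun_mul ((h _).fun_inv hx)
  exact (hdiv _).fun_sub (.fun_sum fun l _ => (hdiv l).const_mul _)

theorem GammaCone_subset_gammaConeOn (n k : ℕ) : GammaCone n k ⊆ gammaConeOn univ k := by
  intro x hx j hj
  rcases Nat.eq_zero_or_pos j with rfl | h
  · rw [esymmOn_zero]
    exact one_pos
  · exact hx j h hj

/-- Concavity estimate: `∑ᵢ fᵢ(λ) μᵢ ≥ f(μ) + ∑_{l=0}^{k-2} (k-l) β_l σ_l(λ)/σ_{k-1}(λ)`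
for `λ, μ` in the Gårding cone `Γ_{k-1}`. -/
theorem fmix_deriv_pairing_lower_bound (n k : ℕ) (hk2 : 2 ≤ k) (hkn : k ≤ n)
    (β : ℕ → ℝ) (hβ : ∀ l, l ≤ k - 2 → 0 ≤ β l)
    (lam mu : Fin n → ℝ)
    (hlam : lam ∈ GammaCone n (k-1)) (hmu : mu ∈ GammaCone n (k-1)) :
    fmix n k β mu + ∑ l ∈ Finset.range (k-1),
        ((k : ℝ) - (l : ℝ)) * β l * (esymm n l lam / esymm n (k-1) lam)
      ≤ ∑ i : Fin n, fderiv ℝ (fmix n k β) lam (Pi.single i 1) * mu i := by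
  have hx := GammaCone_subset_gammaConeOn n _ hlam
  have hy := GammaCone_subset_gammaConeOn n _ hmu
  obtain ⟨K, rfl⟩ : ∃ K, k = K + 1 := ⟨k - 1, by omega⟩
  simp only [Nat.add_sub_cancel] at *
  have hD : DifferentiableAt ℝ (fmix n (K + 1) β) lam :=
    differentiableAt_fmix (hx K le_rfl).ne'
  have hsum : ∑ i : Fin n, fderiv ℝ (fmix n (K + 1) β) lam (Pi.single i 1) * mu i
      = fderiv ℝ (fmix n (K + 1) β) lam mu := by
    conv_rhs => rw [← Finset.univ_sum_single mu, map_sum]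
    refine sum_congr rfl fun i _ => ?_
    rw [mul_comm, ← smul_eq_mul, ← map_smul, ← Pi.single_smul, smul_eq_mul, mul_one]
  rw [hsum]
  have hline : HasDerivAt (fun t : ℝ => lam + t • mu) mu 0 := by
    simpa using ((hasDerivAt_id (0 : ℝ)).smul_const mu).const_add lam
  have hh : HasDerivAt (fun t : ℝ => fmix n (K + 1) β (lam + t • mu))
      (fderiv ℝ (fmix n (K + 1) β) lam mu) 0 := by
    have hD' : HasFDerivAt (fmix n (K + 1) β) (fderiv ℝ (fmix n (K + 1) β) lam)
        (lam + (0 : ℝ) • mu) := by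
      simpa using hD.hasFDerivAt
    exact hD'.comp_hasDerivAt (0 : ℝ) hline
  have hex : ∀ l : ℕ, ∃ S : ℝ, l < K → 0 ≤ S ∧
      (∀ t : ℝ, 0 < t → esymm n l (lam + t • mu) / esymm n K (lam + t • mu)
        ≤ esymm n l lam / esymm n K lam * (1 + t * S)⁻¹) ∧
      ((K + 1 : ℕ) - l : ℝ) * (esymm n l lam / esymm n K lam)
        ≤ esymm n l lam / esymm n K lam * S + esymm n l mu / esymm n K mu := by
    intro l
    by_cases hl : l < K
    swap
    · exact ⟨0, fun h => absurd h hl⟩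
    obtain ⟨m, rfl⟩ : ∃ m, K = l + m := ⟨K - l, by omega⟩
    obtain ⟨S, hS, h1, h2⟩ := exists_slope_le_esymmOn_div hx hy
    simp only [esymmOn_univ] at h1 h2
    have hpos : ∀ z ∈ gammaConeOn univ (l + m), 0 < esymm n (l + m) z / esymm n l z :=
      fun z hz => div_pos (hz _ le_rfl) (hz _ (by omega))
    have hpx := hpos _ hx
    have hpy := hpos _ hy
    refine ⟨S, fun _ => ⟨hS, fun t ht => ?_, ?_⟩⟩
    · rw [← inv_div, ← inv_div (esymm n (l + m) lam), ← mul_inv]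
      exact inv_anti₀ (by positivity) (h1 t ht)
    · rw [← inv_div, ← inv_div (esymm n (l + m) mu)]
      have h3 := Real.log_le_sub_one_of_pos (div_pos hpx hpy)
      set p := esymm n (l + m) lam / esymm n l lam
      set q := esymm n (l + m) mu / esymm n l mu
      have h4 : (m + 1 : ℝ) ≤ S + p / q := by linarith
      have h5 : p⁻¹ * (m + 1) ≤ p⁻¹ * (S + p / q) := by gcongr
      have h6 : p⁻¹ * (p / q) = q⁻¹ := by field_simp
      push_cast
      linarith
  choose S hS using hex
  have hg : HasDerivAt (fun t : ℝ => (esymmQuot univ K lam + t * esymmQuot univ K mu)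
      - ∑ l ∈ range K, β l * (esymm n l lam / esymm n K lam * (1 + t * S l)⁻¹))
      (esymmQuot univ K mu - ∑ l ∈ range K, β l * (esymm n l lam / esymm n K lam * (-S l))) 0 := by
    refine HasDerivAt.fun_sub ?_ (HasDerivAt.fun_sum fun l _ => ?_)
    · simpa using ((hasDerivAt_id (0 : ℝ)).mul_const (esymmQuot univ K mu)).const_add
        (esymmQuot univ K lam)
    · have h1 : HasDerivAt (fun t : ℝ => 1 + t * S l) (S l) 0 := by
        simpa using ((hasDerivAt_id (0 : ℝ)).mul_const (S l)).const_add 1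
      have h2 := h1.fun_inv (by simp)
      simp only [zero_mul, add_zero, one_pow, div_one] at h2
      exact (h2.const_mul _).const_mul _
  have hβ' : ∀ l ∈ range K, 0 ≤ β l := fun l hl => hβ l (by have := mem_range.1 hl; omega)
  have hle := hg.le_of_le_right hh (by simp [fmix, esymmQuot, esymmOn_univ]) fun t ht => by
    have h1 := (add_smul_mem_gammaConeOn_and_esymmQuot_le hx hy ht).2
    refine sub_le_sub h1 (sum_le_sum fun l hl => ?_)
    exact mul_le_mul_of_nonneg_left ((hS l (mem_range.1 hl)).2.1 t ht) (hβ' l hl)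
  refine le_trans ?_ hle
  rw [fmix, Nat.add_sub_cancel, sub_add_eq_add_sub, add_sub_assoc, ← sum_sub_distrib,
    sub_eq_add_neg, ← sum_neg_distrib]
  refine add_le_add le_rfl (sum_le_sum fun l hl => ?_)
  have h := mul_le_mul_of_nonneg_left (hS l (mem_range.1 hl)).2.2 (hβ' l hl)
  linarith
end

section
/- Let 2 ≤ k ≤ n and let b > 0 and B ≥ 0 be real numbers. There exists a constant C > 0, depending only on n, k, b, B, such that for every λ ∈ Γ_{k−1} and all real numbers β_0,…,β_{k−2} with β_l ≥ b for every l, if |f(λ)| ≤ B then for each 0 ≤ l ≤ k−2 one has 0 < σ_l(λ)/σ_{k−1}(λ) ≤ C. -/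
open Finset

namespace Polynomial

theorem Splits.derivative_of_real {p : ℝ[X]} (hp : p.Splits) : p.derivative.Splits := by
  rw [splits_iff_card_roots] at hp ⊢
  have h₁ := card_roots_le_derivative p
  have h₂ := natDegree_derivative_le p
  have h₃ := card_roots' p.derivative
  lia

theorem Splits.two_mul_coeff_zero_mul_coeff_two_le {p : ℝ[X]} (hp : p.Splits) :
    2 * (p.coeff 0 * p.coeff 2) ≤ p.coeff 1 ^ 2 := by
  obtain ⟨m, hm⟩ := splits_iff_exists_multiset'.mp hp
  suffices h : ∀ m : Multiset ℝ, 2 * ((m.map (X + C ·)).prod.coeff 0 *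
      (m.map (X + C ·)).prod.coeff 2) ≤ (m.map (X + C ·)).prod.coeff 1 ^ 2 by
    rw [hm]
    simp only [coeff_C_mul]
    nlinarith [mul_le_mul_of_nonneg_left (h m) (sq_nonneg p.leadingCoeff)]
  intro m
  induction m using Multiset.induction_on with
  | empty => simp [coeff_one]
  | cons a m ih =>
    simp only [Multiset.map_cons, Multiset.prod_cons, add_mul, coeff_add, coeff_X_mul,
      coeff_X_mul_zero, coeff_C_mul]
    nlinarith [mul_le_mul_of_nonneg_left ih (sq_nonneg a),
      sq_nonneg ((m.map (X + C ·)).prod.coeff 0)]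

/-- **Newton's inequality** for the coefficients of a real-rooted polynomial, in the form that does
not involve the degree. -/
theorem Splits.coeff_mul_coeff_le {p : ℝ[X]} (hp : p.Splits) (m : ℕ) :
    (m + 2) * (p.coeff m * p.coeff (m + 2)) ≤ (m + 1) * p.coeff (m + 1) ^ 2 := by
  induction m generalizing p with
  | zero => simpa using hp.two_mul_coeff_zero_mul_coeff_two_le
  | succ m ih =>
    have h := ih hp.derivative_of_real
    simp only [coeff_derivative] at h
    push_cast at h ⊢
    have hpos : (0 : ℝ) < (m + 1) * (m + 2) := by positivity
    refine le_of_mul_le_mul_left ?_ hpos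
    rw [show m + 1 + 2 = m + 2 + 1 by lia]
    linarith

theorem Splits.coeff_mul_coeff_le_sq_s4 {p : ℝ[X]} (hp : p.Splits) (m : ℕ) :
    p.coeff m * p.coeff (m + 2) ≤ p.coeff (m + 1) ^ 2 := by
  have h := hp.coeff_mul_coeff_le m
  have hm : (0 : ℝ) < m + 2 := by positivity
  refine le_of_mul_le_mul_left (h.trans ?_) hm
  gcongr
  norm_num

end Polynomial

theorem esymm_zero (n : ℕ) (lam : Fin n → ℝ) : esymm n 0 lam = 1 := by
  simp [esymm]

open Polynomial in
theorem esymm_mul_esymm_le_sq {n j : ℕ} (hj : j + 2 ≤ n) (lam : Fin n → ℝ) :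
    esymm n j lam * esymm n (j + 2) lam ≤ esymm n (j + 1) lam ^ 2 := by
  have hcoeff (i : ℕ) (hi : i ≤ n) :
      (∏ r, (X + C (lam r))).coeff (n - i) = esymm n i lam := by
    rw [Finset.prod_X_add_C_coeff _ _ (by simp), esymm]
    simp [Nat.sub_sub_self hi]
  have hsplits : (∏ r, (X + C (lam r))).Splits := Splits.prod fun r _ ↦ Splits.X_add_C (lam r)
  have h := hsplits.coeff_mul_coeff_le_sq_s4 (n - (j + 2))
  rw [show n - (j + 2) + 2 = n - j by lia, show n - (j + 2) + 1 = n - (j + 1) by lia,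
    hcoeff _ hj, hcoeff j (by lia), hcoeff (j + 1) (by lia)] at h
  linarith

theorem esymm_pos_of_mem_GammaCone {n k l : ℕ} {lam : Fin n → ℝ} (h : lam ∈ GammaCone n k)
    (hl : l ≤ k) : 0 < esymm n l lam := by
  rcases Nat.eq_zero_or_pos l with rfl | hpos
  · simp [esymm_zero]
  · exact h l hpos hl

/-- By log-concavity, if `σ_m ≤ σ_{m+1}` on `Γ_m` then the sequence `σ_0, …, σ_m` is monotone. -/
theorem esymm_le_of_esymm_le_succ {n m : ℕ} {lam : Fin n → ℝ} (hmn : m + 1 ≤ n)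
    (h : lam ∈ GammaCone n m) (hm : esymm n m lam ≤ esymm n (m + 1) lam) {l : ℕ} (hl : l ≤ m) :
    esymm n l lam ≤ esymm n m lam := by
  suffices H : esymm n l lam ≤ esymm n m lam ∧ esymm n l lam ≤ esymm n (l + 1) lam from H.1
  induction hl using Nat.decreasingInduction with
  | self => exact ⟨le_rfl, hm⟩
  | of_succ l hl ih =>
    have h₀ := esymm_pos_of_mem_GammaCone h hl.le
    have h₁ := esymm_pos_of_mem_GammaCone h hl
    have hle : esymm n l lam ≤ esymm n (l + 1) lam := by
      refine le_of_mul_le_mul_right ?_ h₁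
      calc esymm n l lam * esymm n (l + 1) lam
          ≤ esymm n l lam * esymm n (l + 2) lam := mul_le_mul_of_nonneg_left ih.2 h₀.le
        _ ≤ esymm n (l + 1) lam ^ 2 := esymm_mul_esymm_le_sq (by lia) lam
        _ = _ := sq _
    exact ⟨hle.trans ih.1, hle⟩

/-- Uniform bounds `0 < σ_l(λ)/σ_{k-1}(λ) ≤ C` for `0 ≤ l ≤ k-2`, with `C` depending
only on `n, k, b, B`, whenever all `β_l ≥ b > 0` and `|f(λ)| ≤ B`. -/
theorem quotient_bounds_of_fmix_bounded (n k : ℕ) (hk2 : 2 ≤ k) (hkn : k ≤ n)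
    (b B : ℝ) (hb : 0 < b) (hB : 0 ≤ B) :
    ∃ C > 0, ∀ (β : ℕ → ℝ), (∀ l, l ≤ k - 2 → b ≤ β l) →
      ∀ lam ∈ GammaCone n (k-1), |fmix n k β lam| ≤ B →
      ∀ l, l ≤ k - 2 →
        0 < esymm n l lam / esymm n (k-1) lam ∧
          esymm n l lam / esymm n (k-1) lam ≤ C := by
  obtain ⟨m, rfl⟩ : ∃ m, k = m + 1 := ⟨k - 1, by lia⟩
  refine ⟨max 1 ((1 + B) / b), by positivity, fun β hβ lam hlam hf l hl ↦ ?_⟩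
  simp only [fmix, Nat.add_sub_cancel] at hlam hf ⊢
  have hpos {j : ℕ} (hj : j ≤ m) : 0 < esymm n j lam := esymm_pos_of_mem_GammaCone hlam hj
  have hm := hpos le_rfl
  have hlm : l < m := by lia
  refine ⟨div_pos (hpos hlm.le) hm, ?_⟩
  rcases le_total (esymm n m lam) (esymm n (m + 1) lam) with hcase | hcase
  · refine le_max_of_le_left ?_
    rw [div_le_one hm]
    exact esymm_le_of_esymm_le_succ hkn hlam hcase hlm.le
  · refine le_max_of_le_right ?_
    have hq : esymm n (m + 1) lam / esymm n m lam ≤ 1 := (div_le_one hm).mpr hcase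
    have hterm : β l * (esymm n l lam / esymm n m lam)
        ≤ ∑ j ∈ Finset.range m, β j * (esymm n j lam / esymm n m lam) := by
      refine Finset.single_le_sum (f := fun j ↦ β j * (esymm n j lam / esymm n m lam))
        (fun j hj ↦ ?_) (Finset.mem_range.mpr hlm)
      have hjm := Finset.mem_range.mp hj
      exact mul_nonneg (hb.le.trans (hβ j (by lia))) (div_pos (hpos hjm.le) hm).le
    have hbl : b * (esymm n l lam / esymm n m lam) ≤ β l * (esymm n l lam / esymm n m lam) :=
      mul_le_mul_of_nonneg_right (hβ l hl) (div_pos (hpos hlm.le) hm).le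
    rw [le_div_iff₀ hb]
    linarith [(abs_le.mp hf).1]
end
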